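/- (Gabriel's Theorem, part 3) Let k be an algebraically closed field and let Q be a finite quiver of finite representation type (equivalently, with underlying graph a union of Dynkin graphs of type A, D, E). Then the map V ↦ d_V = (dim V_i)_{i∈Q_0} induces a bijection between the set of isomorphism classes of indecomposable representations of Q and the set of positive roots of the root system associated to the underlying graph of Q; equivalently, a bijection onto the set of nonzero vectors α ∈ Z_{≥0}^{Q_0} with q(α) = 1, where q is the Tits form of Q. -/

import Mathlib

/-! Statement 11 (Gabriel's theorem, part 3): for a quiver of finite representation type
over an algebraically closed field, V ↦ dim vector of V induces a bijection between
isomorphism classes of indecomposable representations and positive roots of the root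
system of the underlying graph, i.e. the nonzero α ∈ ℤ_{≥0}^{Q₀} with q(α) = 1 where q is
the Tits form. -/

/-- A finite-dimensional representation of the quiver `(I, E, s, t)` over the field `k`:
a finite-dimensional `k`-vector space `V i` for each vertex `i` and a `k`-linear map
`f e : V (s e) → V (t e)` for each arrow `e`. -/
structure QRep (k : Type) [Field k] (I E : Type) (s t : E → I) where
  V : I → Type
  [acg : ∀ i, AddCommGroup (V i)]
  [mod : ∀ i, Module k (V i)]
  [fd : ∀ i, FiniteDimensional k (V i)]
  f : ∀ e : E, V (s e) →ₗ[k] V (t e)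

attribute [instance] QRep.acg QRep.mod QRep.fd

namespace QRep

variable {k : Type} [Field k] {I E : Type} {s t : E → I}

/-- Isomorphism of quiver representations: a collection of linear equivalences commuting
with the structure maps. -/
def Iso (M N : QRep k I E s t) : Prop :=
  ∃ φ : ∀ i, M.V i ≃ₗ[k] N.V i,
    ∀ (e : E) (v : M.V (s e)), φ (t e) (M.f e v) = N.f e (φ (s e) v)

/-- Direct sum of two quiver representations, defined vertexwise and arrowwise. -/
def dsum (M N : QRep k I E s t) : QRep k I E s t where
  V i := M.V i × N.V i
  f e := (M.f e).prodMap (N.f e)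

/-- The trivial (zero) representation. -/
def zero (k : Type) [Field k] (I E : Type) (s t : E → I) : QRep k I E s t where
  V _ := PUnit
  f _ := 0

/-- A representation is trivial if all its vector spaces are zero. -/
def IsTrivial (M : QRep k I E s t) : Prop := ∀ i, Subsingleton (M.V i)

/-- A representation is indecomposable if it is nontrivial and not isomorphic to a direct
sum of two nontrivial representations. -/
def Indecomposable (M : QRep k I E s t) : Prop :=
  ¬ M.IsTrivial ∧
    ∀ A B : QRep k I E s t, ¬ A.IsTrivial → ¬ B.IsTrivial → ¬ M.Iso (A.dsum B)

/-- Finite direct sums of quiver representations. -/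
def dsumFin : (n : ℕ) → (Fin n → QRep k I E s t) → QRep k I E s t
  | 0, _ => zero k I E s t
  | n + 1, F => (F 0).dsum (dsumFin n fun a => F a.succ)

/-- The dimension vector of a representation. -/
noncomputable def dimVec (M : QRep k I E s t) : I → ℕ := fun i => Module.finrank k (M.V i)

end QRep

/-- A quiver has finite representation type over `k` if it has only finitely many
isomorphism classes of indecomposable (finite-dimensional) representations. -/
def FiniteRepType (k : Type) [Field k] (I E : Type) (s t : E → I) : Prop :=
  ∃ (n : ℕ) (F : Fin n → QRep k I E s t),
    ∀ M : QRep k I E s t, M.Indecomposable → ∃ a, M.Iso (F a)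

/-- The Tits form `q(α) = Σ_i α(i)² − Σ_ρ α(t(ρ))α(h(ρ))` of the quiver `(I, E, s, t)`.
For a quiver whose underlying graph is a simply-laced Dynkin graph, the positive roots of
the associated root system, written in the basis of simple roots, are exactly the nonzero
`α ∈ ℤ_{≥0}^{Q₀}` with `q(α) = 1`. -/
def titsForm (I E : Type) [Fintype I] [Fintype E] (s t : E → I) (α : I → ℕ) : ℤ :=
  ∑ i : I, (α i : ℤ) ^ 2 - ∑ e : E, (α (s e) : ℤ) * (α (t e) : ℤ)

set_option linter.unusedVariables false
namespace QRep

variable {k : Type} [Field k] {I E : Type} {s t : E → I}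

/-- families of linear maps -/
abbrev Fam (M N : QRep k I E s t) : Type := ∀ i, M.V i →ₗ[k] N.V i

def IsHom {M N : QRep k I E s t} (φ : Fam M N) : Prop :=
  ∀ (e : E) (v : M.V (s e)), φ (t e) (M.f e v) = N.f e (φ (s e) v)

/-- the standard two-term complex -/
def dl (M N : QRep k I E s t) :
    Fam M N →ₗ[k] (∀ e, M.V (s e) →ₗ[k] N.V (t e)) where
  toFun φ := fun e => N.f e ∘ₗ φ (s e) - φ (t e) ∘ₗ M.f e
  map_add' φ ψ := by
    funext e; ext v; simp; abel
  map_smul' c φ := by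
    funext e; ext v; simp [smul_sub]

theorem dl_apply {M N : QRep k I E s t} (φ : Fam M N) (e : E) (v : M.V (s e)) :
    dl M N φ e v = N.f e (φ (s e) v) - φ (t e) (M.f e v) := rfl

theorem isHom_iff {M N : QRep k I E s t} (φ : Fam M N) : IsHom φ ↔ dl M N φ = 0 := by
  constructor
  · intro h; funext e; ext v; simp [dl_apply, h e v]
  · intro h e v
    have := LinearMap.congr_fun (congrFun h e) v
    rw [dl_apply] at this
    exact (sub_eq_zero.mp this).symm

def ExtZ (M N : QRep k I E s t) : Prop := Function.Surjective (dl M N)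

def Brick (M : QRep k I E s t) : Prop :=
  ¬ M.IsTrivial ∧ ∀ φ : Fam M M, IsHom φ → ∃ c : k, ∀ i v, φ i v = c • v

theorem extZ_retract_left {M M' N : QRep k I E s t} (j : Fam M' M) (r : Fam M M')
    (hj : IsHom j) (hrj : ∀ i v, r i (j i v) = v) (h : ExtZ M N) : ExtZ M' N := by
  intro η
  obtain ⟨φ, hφ⟩ := h (fun e => η e ∘ₗ r (s e))
  refine ⟨fun i => φ i ∘ₗ j i, ?_⟩
  funext e; ext v
  have := LinearMap.congr_fun (congrFun hφ e) (j (s e) v)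
  simp only [dl_apply, LinearMap.comp_apply, hrj] at this ⊢
  rw [hj e v, this]

theorem extZ_retract_right {M N N' : QRep k I E s t} (j : Fam N' N) (r : Fam N N')
    (hr : IsHom r) (hrj : ∀ i v, r i (j i v) = v) (h : ExtZ M N) : ExtZ M N' := by
  intro η
  obtain ⟨φ, hφ⟩ := h (fun e => j (t e) ∘ₗ η e)
  refine ⟨fun i => r i ∘ₗ φ i, ?_⟩
  funext e; ext v
  have := congrArg (r (t e)) (LinearMap.congr_fun (congrFun hφ e) v)
  simp only [dl_apply, LinearMap.comp_apply, hrj, map_sub] at this ⊢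
  rw [← hr e, this]

def di1 (A B : QRep k I E s t) : Fam A (A.dsum B) := fun i => LinearMap.inl k (A.V i) (B.V i)
def di2 (A B : QRep k I E s t) : Fam B (A.dsum B) := fun i => LinearMap.inr k (A.V i) (B.V i)
def dp1 (A B : QRep k I E s t) : Fam (A.dsum B) A := fun i => LinearMap.fst k (A.V i) (B.V i)
def dp2 (A B : QRep k I E s t) : Fam (A.dsum B) B := fun i => LinearMap.snd k (A.V i) (B.V i)

section
variable (A B : QRep k I E s t)
theorem di1_hom : IsHom (di1 A B) := fun e v => Prod.ext rfl (map_zero (B.f e)).symm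
theorem di2_hom : IsHom (di2 A B) := fun e v => Prod.ext (map_zero (A.f e)).symm rfl
theorem dp1_hom : IsHom (dp1 A B) := fun e v => rfl
theorem dp2_hom : IsHom (dp2 A B) := fun e v => rfl
theorem dp1_di1 (i) (v : A.V i) : dp1 A B i (di1 A B i v) = v := rfl
theorem dp2_di2 (i) (v : B.V i) : dp2 A B i (di2 A B i v) = v := rfl
theorem dp1_di2 (i) (v : B.V i) : dp1 A B i (di2 A B i v) = 0 := rfl
theorem dp2_di1 (i) (v : A.V i) : dp2 A B i (di1 A B i v) = 0 := rfl
theorem di_dp (i) (v : (A.dsum B).V i) :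
    di1 A B i (dp1 A B i v) + di2 A B i (dp2 A B i v) = v :=
  Prod.ext (add_zero (dp1 A B i v)) (zero_add (dp2 A B i v))
end

theorem extZ_dsum_left {A B N : QRep k I E s t} (hA : ExtZ A N) (hB : ExtZ B N) :
    ExtZ (A.dsum B) N := by
  intro η
  obtain ⟨φ, hφ⟩ := hA (fun e => η e ∘ₗ di1 A B (s e))
  obtain ⟨ψ, hψ⟩ := hB (fun e => η e ∘ₗ di2 A B (s e))
  refine ⟨fun i => φ i ∘ₗ dp1 A B i + ψ i ∘ₗ dp2 A B i, ?_⟩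
  funext e
  refine LinearMap.ext ?_
  intro v
  have h1 := LinearMap.congr_fun (congrFun hφ e) (dp1 A B _ v)
  have h2 := LinearMap.congr_fun (congrFun hψ e) (dp2 A B _ v)
  conv_rhs => rw [← di_dp A B _ v]
  simp only [dl_apply, LinearMap.comp_apply, LinearMap.add_apply, map_add] at h1 h2 ⊢
  rw [← h1, ← h2, dp1_hom A B e v, dp2_hom A B e v]
  abel

theorem extZ_dsum_right {A B N : QRep k I E s t} (hA : ExtZ N A) (hB : ExtZ N B) :
    ExtZ N (A.dsum B) := by
  intro η
  obtain ⟨φ, hφ⟩ := hA (fun e => dp1 A B (t e) ∘ₗ η e)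
  obtain ⟨ψ, hψ⟩ := hB (fun e => dp2 A B (t e) ∘ₗ η e)
  refine ⟨fun i => di1 A B i ∘ₗ φ i + di2 A B i ∘ₗ ψ i, ?_⟩
  funext e
  refine LinearMap.ext ?_
  intro v
  have h1 := LinearMap.congr_fun (congrFun hφ e) v
  have h2 := LinearMap.congr_fun (congrFun hψ e) v
  conv_rhs => rw [← di_dp A B _ (η e v)]
  simp only [dl_apply, LinearMap.comp_apply, LinearMap.add_apply, map_add] at h1 h2 ⊢
  rw [← h1, ← h2, ← di1_hom A B e, ← di2_hom A B e, map_sub, map_sub]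
  abel

theorem Iso.symm {M N : QRep k I E s t} (h : M.Iso N) : N.Iso M := by
  obtain ⟨φ, hφ⟩ := h
  refine ⟨fun i => (φ i).symm, fun e v => ?_⟩
  apply (φ (t e)).injective
  rw [hφ]; simp

theorem Iso.trans {M N L : QRep k I E s t} (h : M.Iso N) (h' : N.Iso L) : M.Iso L := by
  obtain ⟨φ, hφ⟩ := h
  obtain ⟨ψ, hψ⟩ := h'
  exact ⟨fun i => (φ i).trans (ψ i), fun e v => by simp [hφ, hψ]⟩

theorem Iso.dim {M N : QRep k I E s t} (h : M.Iso N) : M.dimVec = N.dimVec := by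
  obtain ⟨φ, hφ⟩ := h
  funext i
  exact (φ i).finrank_eq

theorem Iso.extZ {M N : QRep k I E s t} (h : M.Iso N) (hN : ExtZ N N) : ExtZ M M := by
  obtain ⟨φ, hφ⟩ := h
  have h1 : ExtZ M N := extZ_retract_left (fun i => (φ i).toLinearMap)
    (fun i => (φ i).symm.toLinearMap) hφ (by simp) hN
  refine extZ_retract_right (fun i => (φ i).toLinearMap)
    (fun i => (φ i).symm.toLinearMap) ?_ (by simp) h1
  intro e v
  apply (φ (t e)).injective
  have := hφ e ((φ (s e)).symm v)
  simp_all

theorem Iso.decomp {M A B : QRep k I E s t} (h : M.Iso (A.dsum B)) :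
    ∃ (j1 : Fam A M) (j2 : Fam B M) (p1 : Fam M A) (p2 : Fam M B),
      IsHom j1 ∧ IsHom j2 ∧ IsHom p1 ∧ IsHom p2 ∧ (∀ i v, p1 i (j1 i v) = v) ∧
      (∀ i v, p2 i (j2 i v) = v) ∧ (∀ i v, p1 i (j2 i v) = 0) ∧ (∀ i v, p2 i (j1 i v) = 0) ∧
      (∀ i v, j1 i (p1 i v) + j2 i (p2 i v) = v) := by
  obtain ⟨ψ, hψ⟩ := h.symm
  obtain ⟨φ, hφ⟩ : ∃ φ : ∀ i, M.V i ≃ₗ[k] (A.dsum B).V i, ∀ i, φ i = (ψ i).symm := ⟨_, fun _ => rfl⟩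
  have hφh : ∀ (e : E) (v : M.V (s e)), φ (t e) (M.f e v) = (A.dsum B).f e (φ (s e) v) := by
    intro e v
    apply (ψ (t e)).injective
    rw [hψ]; simp [hφ]
  refine ⟨fun i => (ψ i).toLinearMap ∘ₗ di1 A B i, fun i => (ψ i).toLinearMap ∘ₗ di2 A B i,
    fun i => dp1 A B i ∘ₗ (φ i).toLinearMap, fun i => dp2 A B i ∘ₗ (φ i).toLinearMap,
    ?_, ?_, ?_, ?_, ?_, ?_, ?_, ?_, ?_⟩
  · intro e v; simp [di1_hom A B e v, hψ]
  · intro e v; simp [di2_hom A B e v, hψ]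
  · intro e v; simp [hφh, dp1_hom A B e _]
  · intro e v; simp [hφh, dp2_hom A B e _]
  · intro i v; simp [hφ, dp1_di1]
  · intro i v; simp [hφ, dp2_di2]
  · intro i v; simp [hφ, dp1_di2]
  · intro i v; simp [hφ, dp2_di1]
  · intro i v; simp [← map_add, di_dp, hφ]

theorem indec_of_idem (M : QRep k I E s t) (h0 : ¬ M.IsTrivial)
    (h : ∀ e : Fam M M, IsHom e → (∀ i v, e i (e i v) = e i v) →
      (∀ i v, e i v = 0) ∨ (∀ i v, e i v = v)) : M.Indecomposable := by
  refine ⟨h0, ?_⟩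
  intro A B hA hB hiso
  obtain ⟨j1, j2, p1, p2, hj1, hj2, hp1, hp2, h11, h22, h12, h21, hs⟩ := hiso.decomp
  have he1 : IsHom (M := M) (N := M) (fun i => j1 i ∘ₗ p1 i) := by
    intro a v
    simp [hj1 a _, hp1 a _]
  rcases h (fun i => j1 i ∘ₗ p1 i) he1 (by intro i v; simp [h11]) with h1 | h1
  · apply hA
    intro i
    have key : ∀ x : A.V i, x = 0 := by
      intro x
      have := h1 i (j1 i x)
      simp only [LinearMap.comp_apply, h11] at this
      rw [← h11 i x, this, map_zero]
    exact ⟨fun x y => by rw [key x, key y]⟩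
  · apply hB
    intro i
    have key : ∀ x : B.V i, x = 0 := by
      intro x
      have := h1 i (j2 i x)
      simp only [LinearMap.comp_apply, h12, map_zero] at this
      rw [← h22 i x, ← this, map_zero]
    exact ⟨fun x y => by rw [key x, key y]⟩

/-- subrepresentation -/
def sub (M : QRep k I E s t) (P : ∀ i, Submodule k (M.V i))
    (hP : ∀ e, ∀ v ∈ P (s e), M.f e v ∈ P (t e)) : QRep k I E s t where
  V i := P i
  f e := (M.f e).restrict (hP e)

theorem indec_end {X : QRep k I E s t} (hX : X.Indecomposable) (θ : Fam X X) (hθ : IsHom θ)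
    (hd : ∀ i v, θ i (θ i v) = 0 → θ i v = 0) :
    (∀ i v, θ i v = 0 → v = 0) ∨ (∀ i v, θ i v = 0) := by
  by_contra hcon
  push Not at hcon
  obtain ⟨⟨i, v, hv, hv0⟩, ⟨j, w, hw⟩⟩ := hcon
  have hk : ∀ e, ∀ v ∈ LinearMap.ker (θ (s e)), X.f e v ∈ LinearMap.ker (θ (t e)) := by
    intro e v hv
    rw [LinearMap.mem_ker] at hv ⊢
    rw [hθ, hv, map_zero]
  have hr : ∀ e, ∀ v ∈ LinearMap.range (θ (s e)), X.f e v ∈ LinearMap.range (θ (t e)) := by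
    rintro e _ ⟨v, rfl⟩
    exact ⟨X.f e v, hθ e v⟩
  have hc : ∀ i, IsCompl (LinearMap.ker (θ i)) (LinearMap.range (θ i)) := by
    intro i
    have hdis : Disjoint (LinearMap.ker (θ i)) (LinearMap.range (θ i)) := by
      rw [Submodule.disjoint_def]
      rintro _ hx ⟨v, rfl⟩
      exact hd i v hx
    refine (Submodule.isCompl_iff_disjoint _ _ ?_).mpr hdis
    rw [add_comm, LinearMap.finrank_range_add_finrank_ker]
  refine hX.2 (X.sub _ hk) (X.sub _ hr) ?_ ?_ (Iso.symm ⟨fun i => Submodule.prodEquivOfIsCompl _ _ (hc i), ?_⟩)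
  · intro h
    have := h i
    have h2 := this.elim (⟨v, hv⟩ : LinearMap.ker (θ i)) 0
    exact hv0 (congrArg Subtype.val h2)
  · intro h
    have := h j
    have h2 := this.elim (⟨θ j w, w, rfl⟩ : LinearMap.range (θ j)) 0
    exact hw (congrArg Subtype.val h2)
  · rintro e ⟨a, b⟩
    exact (map_add (X.f e) (Subtype.val a) (Subtype.val b)).symm

section tower

variable (B : QRep k I E s t) (η : ∀ e, B.V (s e) →ₗ[k] B.V (t e)) (n : ℕ)

def pr (i : I) (a : ℕ) : (Fin n → B.V i) →ₗ[k] B.V i :=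
  if h : a < n then LinearMap.proj ⟨a, h⟩ else 0

def tower : QRep k I E s t where
  V i := Fin n → B.V i
  f e := LinearMap.pi fun a : Fin n => B.f e ∘ₗ pr B n (s e) a +
    (if (a : ℕ) = 0 then 0 else η e ∘ₗ pr B n (s e) ((a : ℕ) - 1))

def tp (a : ℕ) : Fam (tower B η n) B := fun i => pr B n i a
def sg (i : I) (b : ℕ) : B.V i →ₗ[k] (Fin n → B.V i) :=
  if h : b < n then LinearMap.single k (fun _ : Fin n => B.V i) ⟨b, h⟩ else 0
def ts (b : ℕ) : Fam B (tower B η n) := fun i => sg B n i b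

theorem pr_sg (i : I) (a b : ℕ) (hb : b < n) (v : B.V i) :
    pr B n i a (sg B n i b v) = if a = b then v else 0 := by
  by_cases ha : a < n
  · by_cases hab : a = b
    · subst hab; simp [pr, sg, ha]
    · simp [pr, sg, ha, hb, hab]
  · simp only [pr, ha, dif_neg, not_false_eq_true]
    rw [if_neg (by omega)]; rfl

theorem tower_ext {i : I} (v w : (tower B η n).V i)
    (h : ∀ a < n, tp B η n a i v = tp B η n a i w) : v = w := by
  funext a
  have := h a a.2
  have h1 : ∀ w : Fin n → B.V i, pr B n i a w = w a := fun w => by simp [pr]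
  exact (h1 v).symm.trans (this.trans (h1 w))

theorem tp_ts (i : I) (a b : ℕ) (hb : b < n) (v : B.V i) :
    tp B η n a i (ts B η n b i v) = if a = b then v else 0 :=
  pr_sg B n i a b hb v

theorem ts_big (i : I) (b : ℕ) (hb : n ≤ b) (v : B.V i) : ts B η n b i v = 0 := by
  simp only [ts, sg, not_lt.mpr hb, dif_neg, not_false_eq_true]; rfl

theorem tp_f_zero (hn : 0 < n) (e : E) (v : (tower B η n).V (s e)) :
    tp B η n 0 (t e) ((tower B η n).f e v) = B.f e (tp B η n 0 (s e) v) := by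
  have h1 : ∀ w : Fin n → B.V (t e), pr B n (t e) 0 w = w ⟨0, hn⟩ := fun w => by simp [pr, hn]
  refine (h1 _).trans ?_
  change B.f e (pr B n (s e) 0 v) +
    (if (0 : ℕ) = 0 then 0 else η e ∘ₗ pr B n (s e) (0 - 1)) v = _
  rw [if_pos rfl]
  exact add_zero _

theorem tp_f_succ (a : ℕ) (hn : a + 1 < n) (e : E) (v : (tower B η n).V (s e)) :
    tp B η n (a + 1) (t e) ((tower B η n).f e v) =
      B.f e (tp B η n (a + 1) (s e) v) + η e (tp B η n a (s e) v) := by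
  have h1 : ∀ w : Fin n → B.V (t e), pr B n (t e) (a + 1) w = w ⟨a + 1, hn⟩ :=
    fun w => by simp [pr, hn]
  refine (h1 _).trans ?_
  change B.f e (pr B n (s e) (a + 1) v) +
    (if (a + 1 : ℕ) = 0 then 0 else η e ∘ₗ pr B n (s e) (a + 1 - 1)) v = _
  rw [if_neg (by omega)]
  rfl

theorem f_ts (b : ℕ) (hb : b < n) (e : E) (v : B.V (s e)) :
    (tower B η n).f e (ts B η n b (s e) v) =
      ts B η n b (t e) (B.f e v) + ts B η n (b + 1) (t e) (η e v) := by
  apply tower_ext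
  intro a ha
  rw [map_add, tp_ts _ _ _ _ _ _ hb]
  have h2 : tp B η n a (t e) (ts B η n (b + 1) (t e) (η e v)) = if a = b + 1 then η e v else 0 := by
    by_cases hb1 : b + 1 < n
    · rw [tp_ts _ _ _ _ _ _ hb1]
    · rw [ts_big _ _ _ _ _ (by omega), map_zero, if_neg (by omega)]
  rw [h2]
  rcases a with _ | a
  · rw [tp_f_zero _ _ _ ha, tp_ts _ _ _ _ _ _ hb, if_neg (by omega : ¬ (0 = b + 1)), add_zero]
    split_ifs <;> simp
  · rw [tp_f_succ _ _ _ _ ha, tp_ts _ _ _ _ _ _ hb, tp_ts _ _ _ _ _ _ hb]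
    congr 1
    · split_ifs <;> simp
    · by_cases h : a = b
      · simp [h]
      · simp [h]

theorem ts_sum (i : I) (v : (tower B η n).V i) :
    v = ∑ b ∈ Finset.range n, ts B η n b i (tp B η n b i v) := by
  apply tower_ext
  intro a ha
  rw [map_sum, Finset.sum_eq_single a]
  · rw [tp_ts _ _ _ _ _ _ ha, if_pos rfl]
  · intro b hb hba
    rw [tp_ts _ _ _ _ _ _ (Finset.mem_range.mp hb), if_neg hba.symm]
  · intro h; simp at h; omega

theorem tower_dim (i : I) : (tower B η n).dimVec i = n * B.dimVec i := by
  change Module.finrank k (Fin n → B.V i) = _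
  rw [Module.finrank_pi_fintype]; simp [dimVec]

/-- matrix entry of an endomorphism -/
def ent (φ : Fam (tower B η n) (tower B η n)) (a b : ℕ) : Fam B B :=
  fun i => tp B η n a i ∘ₗ φ i ∘ₗ ts B η n b i

variable {B η n}

theorem ent_apply (φ : Fam (tower B η n) (tower B η n)) (a b : ℕ) (i : I) (v : B.V i) :
    ent B η n φ a b i v = tp B η n a i (φ i (ts B η n b i v)) := rfl

theorem ent_big (φ : Fam (tower B η n) (tower B η n)) (a b : ℕ) (hb : n ≤ b) :
    ent B η n φ a b = 0 := by
  funext i; ext v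
  rw [ent_apply, ts_big _ _ _ _ _ hb, map_zero, map_zero]; rfl

theorem ent_zero_row {φ : Fam (tower B η n) (tower B η n)} (hφ : IsHom φ) (b : ℕ) (hb : b < n)
    (e : E) (v : B.V (s e)) :
    dl B B (ent B η n φ 0 b) e v = ent B η n φ 0 (b + 1) (t e) (η e v) := by
  rw [dl_apply, ent_apply, ent_apply, ent_apply, ← tp_f_zero _ _ _ (by omega), ← hφ e,
    f_ts _ _ _ _ hb, map_add, map_add]
  abel

theorem ent_succ_row {φ : Fam (tower B η n) (tower B η n)} (hφ : IsHom φ) (a b : ℕ)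
    (ha : a + 1 < n) (hb : b < n) (e : E) (v : B.V (s e)) :
    dl B B (ent B η n φ (a + 1) b) e v = ent B η n φ (a + 1) (b + 1) (t e) (η e v)
      - η e (ent B η n φ a b (s e) v) := by
  have h1 := tp_f_succ B η n a ha e (φ (s e) (ts B η n b (s e) v))
  rw [← hφ e, f_ts _ _ _ _ hb, map_add, map_add] at h1
  rw [dl_apply, ent_apply, ent_apply, ent_apply, ent_apply]
  rw [← sub_eq_iff_eq_add] at h1
  rw [← h1]
  abel

/-- the common argument: a row satisfying the recursion vanishes -/
theorem row_vanish (hB : B.Brick) (hη : η ∉ LinearMap.range (dl B B)) (c : ℕ → Fam B B) (m : ℕ)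
    (hbig : ∀ b, n ≤ b → c b = 0)
    (hrec : ∀ b, m ≤ b → b < n → ∀ e v, dl B B (c b) e v = c (b + 1) (t e) (η e v)) :
    ∀ b, m < b → c b = 0 := by
  have key : ∀ d b, n ≤ b + d → m < b → c b = 0 := by
    intro d
    induction d with
    | zero => intro b hb _; exact hbig b hb
    | succ d ih =>
      intro b hb hm
      by_cases hbn : n ≤ b
      · exact hbig b hbn
      have h1 : c (b + 1) = 0 := ih (b + 1) (by omega) (by omega)
      have h2 : IsHom (c b) := by
        rw [isHom_iff]
        funext e; ext v
        rw [hrec b (by omega) (by omega), h1]; rfl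
      obtain ⟨γ, hγ⟩ := hB.2 _ h2
      by_cases hγ0 : γ = 0
      · funext i; ext v; rw [hγ, hγ0, zero_smul]; rfl
      · exfalso
        apply hη
        refine ⟨γ⁻¹ • c (b - 1), ?_⟩
        rw [map_smul]
        funext e; ext v
        have h3 := hrec (b - 1) (by omega) (by omega) e v
        rw [show b - 1 + 1 = b by omega, hγ] at h3
        change γ⁻¹ • (dl B B (c (b - 1)) e v) = _
        rw [h3, smul_smul, inv_mul_cancel₀ hγ0, one_smul]
  intro b hb
  exact key n b (by omega) hb

theorem tp_phi (φ : Fam (tower B η n) (tower B η n)) (a : ℕ) (i : I) (v : (tower B η n).V i) :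
    tp B η n a i (φ i v) =
      ∑ b ∈ Finset.range n, ent B η n φ a b i (tp B η n b i v) := by
  conv_lhs => rw [ts_sum B η n i v]
  rw [map_sum, map_sum]
  rfl

theorem tower_scalar (hB : B.Brick) (hη : η ∉ LinearMap.range (dl B B)) (hn : 0 < n)
    {φ : Fam (tower B η n) (tower B η n)} (hφ : IsHom φ) :
    ∃ γ : k, ∀ i v, tp B η n 0 i (φ i v) = γ • tp B η n 0 i v := by
  have h0 := row_vanish hB hη (fun b => ent B η n φ 0 b) 0 (fun b hb => ent_big φ 0 b hb)
    (fun b _ hb e v => ent_zero_row hφ b hb e v)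
  have h2 : IsHom (ent B η n φ 0 0) := by
    rw [isHom_iff]
    funext e; ext v
    rw [ent_zero_row hφ 0 hn]
    rw [show ent B η n φ 0 (0 + 1) = 0 from h0 1 (by omega)]; rfl
  obtain ⟨γ, hγ⟩ := hB.2 _ h2
  refine ⟨γ, fun i v => ?_⟩
  rw [tp_phi, Finset.sum_eq_single 0, hγ]
  · intro b _ hb
    rw [show ent B η n φ 0 b = 0 from h0 b (by omega)]; rfl
  · intro h; simp at h; omega

theorem tower_idem_zero (hB : B.Brick) (hη : η ∉ LinearMap.range (dl B B)) (hn : 0 < n)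
    {φ : Fam (tower B η n) (tower B η n)} (hφ : IsHom φ) (hid : ∀ i v, φ i (φ i v) = φ i v)
    (h0 : ∀ i v, tp B η n 0 i (φ i v) = 0) : ∀ i v, φ i v = 0 := by
  have hrow : ∀ a, a < n → ∀ b, a ≤ b → ent B η n φ a b = 0 := by
    intro a
    induction a with
    | zero => intro _ b _; funext i; ext v; rw [ent_apply, h0]; rfl
    | succ a ih =>
      intro ha b hb
      refine row_vanish hB hη (fun b => ent B η n φ (a + 1) b) a
        (fun b hb => ent_big φ _ b hb) ?_ b (by omega)
      intro b hab hbn e v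
      rw [ent_succ_row hφ a b ha hbn, ih (by omega) b hab]
      simp
  have key : ∀ m, ∀ i v, ∀ a < m, a < n → tp B η n a i (φ i v) = 0 := by
    intro m
    induction m with
    | zero => intro i v a ha; omega
    | succ m ih =>
      intro i v a ha han
      by_cases ham : a < m
      · exact ih i v a ham han
      rw [← hid, tp_phi]
      refine Finset.sum_eq_zero fun b hb => ?_
      rw [Finset.mem_range] at hb
      by_cases hba : b < m
      · rw [ih i v b hba hb, map_zero]
      · rw [hrow a han b (by omega)]; rfl
  intro i v
  apply tower_ext
  intro a ha
  rw [key n i v a ha ha, map_zero]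

theorem tower_indec (hB : B.Brick) (hη : η ∉ LinearMap.range (dl B B)) (hn : 0 < n) :
    (tower B η n).Indecomposable := by
  have hne : ∃ (i : I) (v : B.V i), v ≠ 0 := by
    by_contra hcon
    push Not at hcon
    exact hB.1 fun i => ⟨fun x y => by rw [hcon i x, hcon i y]⟩
  obtain ⟨i₀, v₀, hv₀⟩ := hne
  apply indec_of_idem
  · intro h
    have := (h i₀).elim (ts B η n 0 i₀ v₀) 0
    have h2 := tp_ts B η n i₀ 0 0 hn v₀
    rw [this, map_zero, if_pos rfl] at h2
    exact hv₀ h2.symm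
  · intro e he hid
    obtain ⟨γ, hγ⟩ := tower_scalar hB hη hn he
    have h1 : γ * γ = γ := by
      have h2 := hγ i₀ (e i₀ (ts B η n 0 i₀ v₀))
      rw [hid, hγ, tp_ts _ _ _ _ _ _ hn, if_pos rfl, smul_smul] at h2
      exact (smul_left_injective k hv₀ h2).symm
    have h3 : γ = 0 ∨ γ = 1 := by
      rcases eq_or_ne γ 0 with h | h
      · exact Or.inl h
      · exact Or.inr (mul_left_cancel₀ h (by rw [h1, mul_one]))
    rcases h3 with rfl | rfl
    · left
      exact tower_idem_zero hB hη hn he hid (fun i v => by rw [hγ, zero_smul])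
    · right
      have := tower_idem_zero hB hη hn (φ := fun i => LinearMap.id - e i) ?_ ?_ ?_
      · intro i v
        have := this i v
        simp only [LinearMap.sub_apply, LinearMap.id_apply] at this
        exact (sub_eq_zero.mp this).symm
      · intro a v
        simp [he a v]
      · intro i v
        simp [hid]
      · intro i v
        simp [hγ]

end tower

theorem brick_extZ [Fintype I] [Fintype E] (hQ : FiniteRepType k I E s t)
    {B : QRep k I E s t} (hB : B.Brick) : ExtZ B B := by
  by_contra hcon
  have : ∃ η, η ∉ LinearMap.range (dl B B) := by
    by_contra h
    push Not at h
    exact hcon fun η => h η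
  obtain ⟨η, hη⟩ := this
  obtain ⟨m, F, hF⟩ := hQ
  obtain ⟨i, hi⟩ : ∃ i, B.dimVec i ≠ 0 := by
    by_contra h
    push Not at h
    exact hB.1 fun i => Module.finrank_zero_iff.mp (h i)
  obtain ⟨a, ha⟩ := hF _ (tower_indec hB hη (Nat.succ_pos (∑ a, (F a).dimVec i)))
  have h1 := congrFun ha.dim i
  rw [tower_dim] at h1
  have h2 : (F a).dimVec i ≤ ∑ a, (F a).dimVec i :=
    Finset.single_le_sum (f := fun a => (F a).dimVec i) (fun _ _ => Nat.zero_le _) (Finset.mem_univ a)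
  have h3 := Nat.le_mul_of_pos_right (Nat.succ (∑ a, (F a).dimVec i)) (Nat.pos_of_ne_zero hi)
  omega

set_option linter.unusedSectionVars false
theorem exists_min {α : Type*} (p : α → Prop) (m : α → ℕ) (h : ∃ a, p a) :
    ∃ a, p a ∧ ∀ b, p b → m a ≤ m b := by
  classical
  have h' : ∃ n, ∃ a, p a ∧ m a = n := by
    obtain ⟨a, ha⟩ := h
    exact ⟨_, a, ha, rfl⟩
  obtain ⟨a, ha, hm⟩ := Nat.find_spec h'
  refine ⟨a, ha, fun b hb => ?_⟩
  rw [hm]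
  exact Nat.find_min' h' ⟨b, hb, rfl⟩

theorem factor {U V W : Type} [AddCommGroup U] [AddCommGroup V] [AddCommGroup W]
    [Module k U] [Module k V] [Module k W] (f : V →ₗ[k] W) (g : V →ₗ[k] U)
    (h : ∀ v, f v = 0 → g v = 0) : ∃ q : W →ₗ[k] U, ∀ v, q (f v) = g v := by
  obtain ⟨q, hq⟩ := LinearMap.exists_extend
    ((LinearMap.ker f).liftQ g (fun v hv => h v hv) ∘ₗ f.quotKerEquivRange.symm.toLinearMap)
  refine ⟨q, fun v => ?_⟩
  have := LinearMap.congr_fun hq ⟨f v, v, rfl⟩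
  simp only [LinearMap.comp_apply, Submodule.subtype_apply, LinearEquiv.coe_coe] at this
  rw [this]
  have h2 : f.quotKerEquivRange.symm ⟨f v, v, rfl⟩ = (LinearMap.ker f).mkQ v := by
    rw [LinearEquiv.symm_apply_eq]; rfl
  rw [h2]
  exact Submodule.liftQ_apply _ _ _

section brick
variable [Fintype I]

noncomputable def td (M : QRep k I E s t) : ℕ := ∑ i, M.dimVec i

noncomputable def rk {M N : QRep k I E s t} (φ : Fam M N) : ℕ :=
  ∑ i, Module.finrank k (LinearMap.range (φ i))

theorem dim_dsum (A B : QRep k I E s t) (i : I) :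
    (A.dsum B).dimVec i = A.dimVec i + B.dimVec i :=
  Module.finrank_prod

theorem td_dsum (A B : QRep k I E s t) : (A.dsum B).td = A.td + B.td := by
  simp [td, dim_dsum, Finset.sum_add_distrib]

theorem td_pos {A : QRep k I E s t} (hA : ¬ A.IsTrivial) : 0 < A.td := by
  rw [Nat.pos_iff_ne_zero]
  intro h
  rw [td, Finset.sum_eq_zero_iff] at h
  exact hA fun i => Module.finrank_zero_iff.mp (h i (Finset.mem_univ i))

theorem exists_ne {A : QRep k I E s t} (hA : ¬ A.IsTrivial) : ∃ i, ∃ v : A.V i, v ≠ 0 := by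
  by_contra hcon
  push Not at hcon
  exact hA fun i => ⟨fun x y => by rw [hcon i x, hcon i y]⟩

theorem rk_inj {M N L : QRep k I E s t} (θ : Fam M N) (χ : Fam N L)
    (h : rk θ ≤ rk (M := M) (N := L) (fun i => χ i ∘ₗ θ i)) :
    ∀ i v, χ i (θ i v) = 0 → θ i v = 0 := by
  have hle : ∀ i ∈ Finset.univ, Module.finrank k (LinearMap.range (χ i ∘ₗ θ i)) ≤
      Module.finrank k (LinearMap.range (θ i)) := by
    intro i _
    rw [LinearMap.range_comp]
    exact Submodule.finrank_map_le _ _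
  have heq := (Finset.sum_eq_sum_iff_of_le hle).mp (le_antisymm (Finset.sum_le_sum hle) h)
  intro i v hv
  have h1 := heq i (Finset.mem_univ i)
  have h2 := LinearMap.finrank_range_add_finrank_ker (χ i ∘ₗ θ i)
  have h3 := LinearMap.finrank_range_add_finrank_ker (θ i)
  have h4 : LinearMap.ker (θ i) = LinearMap.ker (χ i ∘ₗ θ i) :=
    Submodule.eq_of_le_of_finrank_le (LinearMap.ker_le_ker_comp _ _) (by omega)
  have h5 : v ∈ LinearMap.ker (χ i ∘ₗ θ i) := hv
  rw [← h4] at h5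
  exact h5

variable [Fintype E] [IsAlgClosed k]

theorem indec_brick (hQ : FiniteRepType k I E s t) : ∀ (n : ℕ) (X : QRep k I E s t),
    X.td = n → X.Indecomposable → X.Brick := by
  intro n
  induction n using Nat.strong_induction_on with
  | _ n ih =>
  intro X hn hX
  refine ⟨hX.1, ?_⟩
  intro φ hφ
  by_contra hsc
  push Not at hsc
  obtain ⟨i₀, v₀, hv₀⟩ := exists_ne hX.1
  have : Nontrivial (X.V i₀) := ⟨v₀, 0, hv₀⟩
  obtain ⟨c, hc⟩ := Module.End.exists_eigenvalue (φ i₀ : Module.End k (X.V i₀))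
  obtain ⟨w₀, hw₀⟩ := hc.exists_hasEigenvector
  have hw1 : φ i₀ w₀ = c • w₀ := hw₀.apply_eq_smul
  let ψ : Fam X X := fun i => φ i - c • LinearMap.id
  have hψa : ∀ i v, ψ i v = φ i v - c • v := fun i v => rfl
  have hψ : IsHom ψ := by
    intro e v
    rw [hψa, hψa, hφ e, map_sub, map_smul]
  have hψ0 : ∃ i v, ψ i v ≠ 0 := by
    obtain ⟨i, v, h⟩ := hsc c
    exact ⟨i, v, by rw [hψa]; exact sub_ne_zero.mpr h⟩
  obtain ⟨θ, ⟨hθ, iθ, vθ, hθ0⟩, hmin⟩ := exists_min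
    (fun θ : Fam X X => IsHom θ ∧ ∃ i v, θ i v ≠ 0) rk ⟨ψ, hψ, hψ0⟩
  -- θ is not injective
  have hninj : ¬ ∀ i v, θ i v = 0 → v = 0 := by
    intro hinj
    have h1 : rk (M := X) (N := X) (fun i => LinearMap.id) ≤ rk ψ := by
      refine le_trans (le_of_eq ?_) (hmin ψ ⟨hψ, hψ0⟩)
      refine Finset.sum_congr rfl fun i _ => ?_
      rw [LinearMap.finrank_range_of_inj (f := θ i)
        ((injective_iff_map_eq_zero (θ i)).mpr (hinj i))]
      rw [LinearMap.finrank_range_of_inj (f := LinearMap.id) Function.injective_id]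
    have h2 := rk_inj (M := X) (N := X) (L := X) (fun i => LinearMap.id) ψ h1 i₀ w₀
      (by rw [LinearMap.id_apply, hψa, hw1, sub_self])
    exact hw₀.2 h2
  have hsq : ∀ i v, θ i (θ i v) = 0 := by
    by_contra hcon
    push Not at hcon
    have h1 := hmin (fun i => θ i ∘ₗ θ i) ⟨by intro e v; simp [hθ e _], hcon⟩
    have h2 := rk_inj θ θ h1
    rcases indec_end hX θ hθ h2 with h | h
    · exact hninj h
    · exact hθ0 (h _ _)
  -- the triples
  obtain ⟨A, ⟨j, p, hj, hθj, hp, hpj, hpθ⟩, hAmin⟩ := exists_min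
    (fun A : QRep k I E s t => ∃ (j : Fam A X) (p : Fam X A), IsHom j ∧ (∀ i v, θ i (j i v) = 0) ∧
      (∀ e v, θ (s e) v = 0 → p (t e) (X.f e v) = A.f e (p (s e) v)) ∧
      (∀ i v, p i (j i v) = v) ∧ ∃ i v, p i (θ i v) ≠ 0) td (by
    have hk : ∀ e, ∀ v ∈ LinearMap.ker (θ (s e)), X.f e v ∈ LinearMap.ker (θ (t e)) := by
      intro e v hv
      rw [LinearMap.mem_ker] at hv ⊢
      rw [hθ, hv, map_zero]
    have hl : ∀ i, ∃ g : X.V i →ₗ[k] LinearMap.ker (θ i),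
        g ∘ₗ (LinearMap.ker (θ i)).subtype = LinearMap.id := fun i =>
      LinearMap.exists_leftInverse_of_injective _ (Submodule.ker_subtype _)
    choose g hg using hl
    have hg' : ∀ i v (hv : θ i v = 0), g i v = ⟨v, hv⟩ := fun i v hv =>
      LinearMap.congr_fun (hg i) ⟨v, hv⟩
    refine ⟨X.sub _ hk, fun i => (LinearMap.ker (θ i)).subtype, g, fun e v => rfl,
      fun i v => v.2, ?_, fun i v => LinearMap.congr_fun (hg i) v, iθ, vθ, ?_⟩
    · intro e v hv
      have h1 : θ (t e) (X.f e v) = 0 := by rw [hθ, hv, map_zero]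
      have e3 : (X.sub (fun i => LinearMap.ker (θ i)) hk).f e
          (⟨v, hv⟩ : LinearMap.ker (θ (s e))) = (⟨X.f e v, h1⟩ : LinearMap.ker (θ (t e))) := rfl
      exact (hg' _ _ h1).trans (e3.symm.trans (congrArg (fun w : LinearMap.ker (θ (s e)) =>
        (X.sub (fun i => LinearMap.ker (θ i)) hk).f e w) (hg' _ _ hv).symm))
    · intro h
      exact hθ0 (congrArg Subtype.val ((hg' _ _ (hsq iθ vθ)).symm.trans h)))
  have hjinj : ∀ i, Function.Injective (j i) := fun i => Function.LeftInverse.injective (hpj i)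
  -- A is indecomposable
  have hAind : A.Indecomposable := by
    obtain ⟨i₁, v₁, h₁⟩ := hpθ
    refine ⟨fun h => h₁ ((h i₁).elim _ _), ?_⟩
    intro A1 A2 hA1 hA2 hiso
    have htd : A.td = A1.td + A2.td := by
      rw [← td_dsum, td, td, hiso.dim]
    have t1 := td_pos hA1
    have t2 := td_pos hA2
    obtain ⟨j1, j2, p1, p2, hj1, hj2, hp1, hp2, h11, h22, h12, h21, hs⟩ := hiso.decomp
    by_cases hz : p1 i₁ (p i₁ (θ i₁ v₁)) = 0
    · have hz2 : p2 i₁ (p i₁ (θ i₁ v₁)) ≠ 0 := by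
        intro hz2
        have := hs i₁ (p i₁ (θ i₁ v₁))
        rw [hz, hz2, map_zero, map_zero, add_zero] at this
        exact h₁ this.symm
      have := hAmin A2 ⟨fun i => j i ∘ₗ j2 i, fun i => p2 i ∘ₗ p i, ?_, ?_, ?_, ?_, i₁, v₁, hz2⟩
      · omega
      · intro e v; simp [hj2 e _, hj e _]
      · intro i v; simp [hθj]
      · intro e v hv; simp [hp e v hv, hp2 e _]
      · intro i v; simp [hpj, h22]
    · have := hAmin A1 ⟨fun i => j i ∘ₗ j1 i, fun i => p1 i ∘ₗ p i, ?_, ?_, ?_, ?_, i₁, v₁, hz⟩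
      · omega
      · intro e v; simp [hj1 e _, hj e _]
      · intro i v; simp [hθj]
      · intro e v hv; simp [hp e v hv, hp1 e _]
      · intro i v; simp [hpj, h11]
  have hlt : A.td < X.td := by
    refine Finset.sum_lt_sum (fun i _ => LinearMap.finrank_le_finrank_of_injective (hjinj i))
      ⟨iθ, Finset.mem_univ _, ?_⟩
    refine lt_of_le_of_ne (LinearMap.finrank_le_finrank_of_injective (hjinj iθ)) ?_
    intro heq
    have hsurj := (LinearMap.injective_iff_surjective_of_finrank_eq_finrank heq).mp (hjinj iθ)
    obtain ⟨u, hu⟩ := hsurj vθ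
    apply hθ0
    rw [← hu, hθj]
  have hE : ExtZ A A := brick_extZ hQ (ih _ (hn ▸ hlt) A rfl hAind)
  -- p θ has the same kernel as θ
  have hker : ∀ i v, p i (θ i v) = 0 → θ i v = 0 := by
    have h1 := hmin (fun i => (j i ∘ₗ p i) ∘ₗ θ i) ⟨by
      intro e v
      simp only [LinearMap.comp_apply]
      rw [hθ, hp e _ (hsq _ _), hj], by
      obtain ⟨i₁, v₁, h₁⟩ := hpθ
      refine ⟨i₁, v₁, fun h => h₁ (hjinj i₁ ?_)⟩
      rw [map_zero]; exact h⟩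
    have h2 := rk_inj θ (fun i => j i ∘ₗ p i) h1
    intro i v hv
    apply h2
    rw [LinearMap.comp_apply, hv, map_zero]
  have hη : ∀ e, ∃ q : A.V (s e) →ₗ[k] A.V (t e), ∀ v, q ((p (s e) ∘ₗ θ (s e)) v) = dl X A p e v := by
    intro e
    apply factor
    intro v hv
    rw [dl_apply, hp e v (hker _ _ hv), sub_self]
  choose η hη using hη
  obtain ⟨ψ', hψ'⟩ := hE η
  let p' : Fam X A := fun i => p i - ψ' i ∘ₗ p i ∘ₗ θ i
  have hp'a : ∀ i v, p' i v = p i v - ψ' i (p i (θ i v)) := fun i v => rfl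
  have hp' : IsHom p' := by
    intro e v
    have h1 := hη e v
    rw [← hψ', dl_apply, dl_apply] at h1
    simp only [LinearMap.comp_apply] at h1
    rw [hp'a, hp'a, hθ, hp e _ (hsq _ _), map_sub]
    rw [sub_eq_sub_iff_add_eq_add] at h1 ⊢
    rw [add_comm]
    exact h1
  have hp'j : ∀ i v, p' i (j i v) = v := by
    intro i v
    rw [hp'a, hθj, map_zero, map_zero, sub_zero, hpj]
  rcases indec_end hX (fun i => j i ∘ₗ p' i) (by intro e v; simp [hj e _, hp' e _])
    (by intro i v h; simpa [hp'j] using h) with h | h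
  · have h1 : ∀ i v, j i (p' i v) = v := by
      intro i v
      have := h i (j i (p' i v) - v) (by simp [hp'j])
      exact sub_eq_zero.mp this
    apply hθ0
    rw [← h1 iθ vθ, hθj]
  · obtain ⟨i₁, v₁, h₁⟩ := hpθ
    apply h₁
    have h2 := h i₁ (j i₁ (p i₁ (θ i₁ v₁)))
    simp only [LinearMap.comp_apply, hp'j] at h2
    exact hjinj i₁ (by rw [h2, map_zero])

end brick

section euler
variable [Fintype I] [Fintype E]

noncomputable def hm (M : QRep k I E s t) : ℕ := Module.finrank k (LinearMap.ker (dl M M))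

theorem euler {M : QRep k I E s t} (h : ExtZ M M) : (M.hm : ℤ) = titsForm I E s t M.dimVec := by
  have h1 := LinearMap.finrank_range_add_finrank_ker (dl M M)
  rw [LinearMap.range_eq_top.mpr h, finrank_top, Module.finrank_pi_fintype,
    Module.finrank_pi_fintype] at h1
  simp only [Module.finrank_linearMap] at h1
  have h2 : ((∑ e, Module.finrank k (M.V (s e)) * Module.finrank k (M.V (t e)) + M.hm : ℕ) : ℤ) =
    ((∑ i, Module.finrank k (M.V i) * Module.finrank k (M.V i) : ℕ) : ℤ) := congrArg _ h1
  push_cast at h2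
  rw [titsForm]
  simp only [dimVec, sq]
  linarith

theorem id_hom (M : QRep k I E s t) : IsHom (M := M) (N := M) (fun i => LinearMap.id) :=
  fun e v => rfl

theorem brick_hm {M : QRep k I E s t} (h : M.Brick) : M.hm = 1 := by
  obtain ⟨i₀, v₀, hv₀⟩ := exists_ne h.1
  have hne : (⟨fun i => LinearMap.id, (isHom_iff _).mp (id_hom M)⟩ : LinearMap.ker (dl M M)) ≠ 0 := by
    intro h0
    have := congrArg Subtype.val h0
    exact hv₀ (LinearMap.congr_fun (congrFun this i₀) v₀)
  rw [hm, finrank_eq_one_iff_of_nonzero' _ hne]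
  rintro ⟨φ, hφ⟩
  obtain ⟨c, hc⟩ := h.2 φ ((isHom_iff _).mpr hφ)
  refine ⟨c, Subtype.ext ?_⟩
  funext i; ext v
  exact (hc i v).symm

theorem indec_of_hm {M : QRep k I E s t} (h0 : ¬ M.IsTrivial) (h : M.hm = 1) : M.Indecomposable := by
  obtain ⟨i₀, v₀, hv₀⟩ := exists_ne h0
  have hne : (⟨fun i => LinearMap.id, (isHom_iff _).mp (id_hom M)⟩ : LinearMap.ker (dl M M)) ≠ 0 := by
    intro h0
    have := congrArg Subtype.val h0
    exact hv₀ (LinearMap.congr_fun (congrFun this i₀) v₀)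
  rw [hm, finrank_eq_one_iff_of_nonzero' _ hne] at h
  apply indec_of_idem _ h0
  intro e he hid
  obtain ⟨c, hc⟩ := h ⟨e, (isHom_iff _).mp he⟩
  have hc' : ∀ i v, e i v = c • v := fun i v =>
    (LinearMap.congr_fun (congrFun (congrArg Subtype.val hc) i) v).symm
  have h1 : c * c = c := by
    have := hid i₀ v₀
    rw [hc', hc', smul_smul] at this
    exact smul_left_injective k hv₀ this
  rcases eq_or_ne c 0 with h | h
  · left; intro i v; rw [hc', h, zero_smul]
  · right; intro i v
    rw [hc', mul_left_cancel₀ h (by rw [h1, mul_one] : c * c = c * 1), one_smul]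

theorem Iso.hm_le {M N : QRep k I E s t} (h : M.Iso N) : M.hm ≤ N.hm := by
  obtain ⟨ψ, hψ⟩ := h.symm
  let C : Fam M M →ₗ[k] Fam N N :=
    { toFun := fun φ i => (ψ i).symm.toLinearMap ∘ₗ φ i ∘ₗ (ψ i).toLinearMap
      map_add' := fun a b => by funext i; ext v; simp
      map_smul' := fun c a => by funext i; ext v; simp }
  have hC : ∀ φ i v, ψ i (C φ i v) = φ i (ψ i v) := fun φ i v => (ψ i).apply_symm_apply _
  refine LinearMap.finrank_le_finrank_of_injective
    (f := C.restrict (p := LinearMap.ker (dl M M)) (q := LinearMap.ker (dl N N)) ?_) ?_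
  · intro φ hφ
    have hφ' := (isHom_iff _).mpr hφ
    refine (isHom_iff _).mp ?_
    intro e v
    apply (ψ (t e)).injective
    rw [hC, hψ, hφ', hψ, hC]
  · rintro ⟨a, ha⟩ ⟨b, hb⟩ hab
    have hab' : C a = C b := congrArg Subtype.val hab
    apply Subtype.ext
    funext i; ext v
    have h1 := hC a i ((ψ i).symm v)
    have h2 := hC b i ((ψ i).symm v)
    rw [hab', h2] at h1
    simpa using h1.symm

end euler

section ext
variable (U V : QRep k I E s t)

def exF (η : ∀ e, U.V (s e) →ₗ[k] V.V (t e)) (e : E) :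
    (V.V (s e) × U.V (s e)) →ₗ[k] (V.V (t e) × U.V (t e)) :=
  (V.f e ∘ₗ LinearMap.fst k _ _ + η e ∘ₗ LinearMap.snd k _ _).prod (U.f e ∘ₗ LinearMap.snd k _ _)

def exr (η : ∀ e, U.V (s e) →ₗ[k] V.V (t e)) : QRep k I E s t where
  V i := V.V i × U.V i
  f e := exF U V η e

def exS (η : ∀ e, U.V (s e) →ₗ[k] V.V (t e)) :
    Submodule k (∀ i, (V.V i × U.V i) →ₗ[k] (V.V i × U.V i)) :=
  LinearMap.ker (dl (exr U V η) (exr U V η))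

variable {U V}

theorem mem_exS {η : ∀ e, U.V (s e) →ₗ[k] V.V (t e)}
    {φ : ∀ i, (V.V i × U.V i) →ₗ[k] (V.V i × U.V i)} :
    φ ∈ exS U V η ↔ ∀ e x, φ (t e) (exF U V η e x) = exF U V η e (φ (s e) x) :=
  (isHom_iff (M := exr U V η) (N := exr U V η) φ).symm

theorem exF_apply (η : ∀ e, U.V (s e) →ₗ[k] V.V (t e)) (e : E) (x : V.V (s e) × U.V (s e)) :
    exF U V η e x = (V.f e x.1 + η e x.2, U.f e x.2) := rfl

theorem finrank_split {W Z : Type} [AddCommGroup W] [Module k W] [FiniteDimensional k W]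
    [AddCommGroup Z] [Module k Z] (g : W →ₗ[k] Z) (S : Submodule k W) :
    Module.finrank k S = Module.finrank k (S.map g) +
      Module.finrank k (S ⊓ LinearMap.ker g : Submodule k W) := by
  have h := LinearMap.finrank_range_add_finrank_ker (g.domRestrict S)
  rw [LinearMap.range_domRestrict, LinearMap.ker_domRestrict] at h
  rw [← h, ← Submodule.map_comap_subtype, Submodule.finrank_map_subtype_eq]

variable (U V) in
def g1 : (∀ i, (V.V i × U.V i) →ₗ[k] (V.V i × U.V i)) →ₗ[k] (∀ i, V.V i →ₗ[k] U.V i) where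
  toFun φ i := LinearMap.snd k _ _ ∘ₗ φ i ∘ₗ LinearMap.inl k _ _
  map_add' a b := by funext i; ext v; simp
  map_smul' c a := by funext i; ext v; simp

variable (U V) in
def g2 : (∀ i, (V.V i × U.V i) →ₗ[k] (V.V i × U.V i)) →ₗ[k]
    ((∀ i, V.V i →ₗ[k] V.V i) × (∀ i, U.V i →ₗ[k] U.V i)) where
  toFun φ := (fun i => LinearMap.fst k _ _ ∘ₗ φ i ∘ₗ LinearMap.inl k _ _,
    fun i => LinearMap.snd k _ _ ∘ₗ φ i ∘ₗ LinearMap.inr k _ _)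
  map_add' a b := by
    refine Prod.ext ?_ ?_ <;> (funext i; ext v; simp)
  map_smul' c a := by
    refine Prod.ext ?_ ?_ <;> (funext i; ext v; simp)

theorem ext_lt [Fintype I] [Fintype E] (h : ¬ ExtZ U V) :
    ∃ η, (exr U V η).hm < (exr U V 0).hm := by
  obtain ⟨η, hη⟩ : ∃ η, ∀ b, dl U V b ≠ η := by
    by_contra hcon
    push Not at hcon
    exact h hcon
  refine ⟨η, ?_⟩
  change Module.finrank k (exS U V η) < Module.finrank k (exS U V 0)
  have hspl : ∀ (φ : ∀ i, (V.V i × U.V i) →ₗ[k] (V.V i × U.V i)) i v u,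
      φ i (v, u) = φ i (v, 0) + φ i (0, u) := by
    intro φ i v u; rw [← map_add]; simp
  have a1 : (exS U V η).map (g1 U V) ≤ (exS U V 0).map (g1 U V) := by
    rintro _ ⟨φ, hφ, rfl⟩
    have hφ' := mem_exS.mp hφ
    refine ⟨fun i => LinearMap.inr k _ _ ∘ₗ g1 U V φ i ∘ₗ LinearMap.fst k _ _, ?_, ?_⟩
    · refine mem_exS.mpr ?_
      rintro e ⟨v, u⟩
      have h1 := congrArg Prod.snd (hφ' e (v, 0))
      simp only [exF_apply, map_zero, add_zero] at h1
      simp [exF_apply, g1, h1]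
    · funext i; ext v; simp [g1]
  have a2 : ((exS U V η) ⊓ LinearMap.ker (g1 U V)).map (g2 U V) <
      ((exS U V 0) ⊓ LinearMap.ker (g1 U V)).map (g2 U V) := by
    refine lt_of_le_of_ne ?_ ?_
    · rintro _ ⟨φ, ⟨hφ, hc⟩, rfl⟩
      have hφ' := mem_exS.mp hφ
      have hc' : ∀ i v, (φ i (v, 0)).2 = 0 := fun i v => LinearMap.congr_fun (congrFun hc i) v
      refine ⟨fun i => ((g2 U V φ).1 i).prodMap ((g2 U V φ).2 i), ⟨?_, ?_⟩, ?_⟩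
      · refine mem_exS.mpr ?_
        rintro e ⟨v, u⟩
        have h1 := congrArg Prod.fst (hφ' e (v, 0))
        have h2 := congrArg Prod.snd (hφ' e (0, u))
        simp only [exF_apply, map_zero, add_zero, zero_add, hc'] at h1 h2
        rw [hspl, Prod.snd_add, hc', zero_add] at h2
        simp [exF_apply, g2, h1, h2]
      · refine LinearMap.mem_ker.mpr ?_
        funext i; ext v; simp [g1]
      · refine Prod.ext ?_ ?_ <;> (funext i; ext v; simp [g2])
    · intro heq
      have hmem : ((fun i => LinearMap.id, fun i => 0) :
          (∀ i, V.V i →ₗ[k] V.V i) × (∀ i, U.V i →ₗ[k] U.V i)) ∈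
          ((exS U V 0) ⊓ LinearMap.ker (g1 U V)).map (g2 U V) := by
        refine ⟨fun i => LinearMap.inl k _ _ ∘ₗ LinearMap.fst k _ _, ⟨?_, ?_⟩, ?_⟩
        · refine mem_exS.mpr ?_
          rintro e ⟨v, u⟩
          simp [exF_apply]
        · refine LinearMap.mem_ker.mpr ?_
          funext i; ext v; simp [g1]
        · refine Prod.ext ?_ ?_ <;> (funext i; ext v; simp [g2])
      rw [← heq] at hmem
      obtain ⟨φ, ⟨hφ, hc⟩, hg⟩ := hmem
      have hφ' := mem_exS.mp hφ
      have ha : ∀ i v, (φ i (v, 0)).1 = v := fun i v =>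
        LinearMap.congr_fun (congrFun (congrArg Prod.fst hg) i) v
      have hd : ∀ i u, (φ i (0, u)).2 = 0 := fun i v =>
        LinearMap.congr_fun (congrFun (congrArg Prod.snd hg) i) v
      refine hη (fun i => LinearMap.fst k _ _ ∘ₗ φ i ∘ₗ LinearMap.inr k _ _) ?_
      funext e; ext u
      have h1 := congrArg Prod.fst (hφ' e (0, u))
      simp only [exF_apply, map_zero, zero_add, hd, add_zero] at h1
      rw [hspl, Prod.fst_add, ha] at h1
      rw [dl_apply]
      simp only [LinearMap.comp_apply, LinearMap.fst_apply, LinearMap.inr_apply]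
      rw [← h1]; abel
  have a3 : (exS U V η) ⊓ LinearMap.ker (g1 U V) ⊓ LinearMap.ker (g2 U V) ≤
      (exS U V 0) ⊓ LinearMap.ker (g1 U V) ⊓ LinearMap.ker (g2 U V) := by
    rintro φ ⟨⟨hφ, hc⟩, hg⟩
    refine ⟨⟨?_, hc⟩, hg⟩
    have hφ' := mem_exS.mp hφ
    have hc' : ∀ i v, (φ i (v, 0)).2 = 0 := fun i v => LinearMap.congr_fun (congrFun hc i) v
    have ha : ∀ i v, (φ i (v, 0)).1 = 0 := fun i v =>
      LinearMap.congr_fun (congrFun (congrArg Prod.fst hg) i) v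
    have hd : ∀ i u, (φ i (0, u)).2 = 0 := fun i v =>
      LinearMap.congr_fun (congrFun (congrArg Prod.snd hg) i) v
    have hv0 : ∀ i v, φ i (v, 0) = 0 := fun i v => Prod.ext (ha i v) (hc' i v)
    refine mem_exS.mpr ?_
    rintro e ⟨v, u⟩
    have h1 := hφ' e (0, u)
    simp only [exF_apply, map_zero, zero_add, hd, add_zero] at h1 ⊢
    rw [hspl, hv0, zero_add] at h1
    rw [hspl φ (t e), hv0, zero_add, hspl φ (s e) v u, hv0, zero_add, hd]
    simpa using h1
  have b1 := Submodule.finrank_mono a1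
  have b2 := Submodule.finrank_lt_finrank_of_lt a2
  have b3 := Submodule.finrank_mono a3
  rw [finrank_split (g1 U V) (exS U V η), finrank_split (g1 U V) (exS U V 0),
    finrank_split (g2 U V) (exS U V η ⊓ _), finrank_split (g2 U V) (exS U V 0 ⊓ _)]
  omega

theorem exr_iso (U V : QRep k I E s t) : (exr U V 0).Iso (U.dsum V) :=
  ⟨fun i => LinearEquiv.prodComm k (V.V i) (U.V i), fun e x =>
    Prod.ext rfl (add_zero (V.f e x.1))⟩

theorem exr_dim (U V : QRep k I E s t) (η) : (exr U V η).dimVec = (exr U V 0).dimVec := rfl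

end ext

section exist

theorem dsum_comm_iso (A B : QRep k I E s t) : (A.dsum B).Iso (B.dsum A) :=
  ⟨fun i => LinearEquiv.prodComm k (A.V i) (B.V i), fun e x => rfl⟩

theorem dsum_congr_left {A A' : QRep k I E s t} (B : QRep k I E s t) (h : A.Iso A') :
    (A.dsum B).Iso (A'.dsum B) := by
  obtain ⟨φ, hφ⟩ := h
  exact ⟨fun i => LinearEquiv.prodCongr (φ i) (LinearEquiv.refl k (B.V i)),
    fun e x => Prod.ext (hφ e x.1) rfl⟩

theorem dsum_assoc_iso (A B C : QRep k I E s t) :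
    ((A.dsum B).dsum C).Iso (A.dsum (B.dsum C)) :=
  ⟨fun i => LinearEquiv.prodAssoc k (A.V i) (B.V i) (C.V i), fun e x => rfl⟩

variable [Fintype I] [Fintype E] [IsAlgClosed k]

theorem extZ_of_gen (hQ : FiniteRepType k I E s t) : ∀ (n : ℕ) (X : QRep k I E s t), X.td = n →
    (∀ U V : QRep k I E s t, X.Iso (U.dsum V) → ExtZ U V) → ExtZ X X := by
  intro n
  induction n using Nat.strong_induction_on with
  | _ n ih =>
  intro X hn hP
  by_cases h0 : X.IsTrivial
  · intro η
    refine ⟨0, ?_⟩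
    funext e; ext v
    exact (h0 (t e)).elim _ _
  by_cases hX : X.Indecomposable
  · exact brick_extZ hQ (indec_brick hQ _ X rfl hX)
  have : ∃ A B : QRep k I E s t, ¬ A.IsTrivial ∧ ¬ B.IsTrivial ∧ X.Iso (A.dsum B) := by
    by_contra hcon
    push Not at hcon
    exact hX ⟨h0, hcon⟩
  obtain ⟨A, B, hA, hB, hiso⟩ := this
  have htd : X.td = A.td + B.td := by
    rw [← td_dsum, td, td, hiso.dim]
  have t1 := td_pos hA
  have t2 := td_pos hB
  have hiso' : X.Iso (B.dsum A) := hiso.trans (dsum_comm_iso A B)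
  have gen : ∀ A B : QRep k I E s t, X.Iso (A.dsum B) → A.td < X.td → ExtZ A A := by
    intro A B hiso hlt
    refine ih _ (hn ▸ hlt) A rfl ?_
    intro U V hUV
    have h1 := hP U (V.dsum B)
      ((hiso.trans (dsum_congr_left B hUV)).trans (dsum_assoc_iso U V B))
    exact extZ_retract_right (di1 V B) (dp1 V B) (dp1_hom V B) (dp1_di1 V B) h1
  exact hiso.extZ (extZ_dsum_left
    (extZ_dsum_right (gen A B hiso (by omega)) (hP A B hiso))
    (extZ_dsum_right (hP B A hiso') (gen B A hiso' (by omega))))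

theorem exists_indec (hQ : FiniteRepType k I E s t) (α : I → ℕ) (hα : α ≠ 0)
    (hq : titsForm I E s t α = 1) : ∃ M : QRep k I E s t, M.Indecomposable ∧ M.dimVec = α := by
  obtain ⟨X, hX, hmin⟩ := exists_min (fun M : QRep k I E s t => M.dimVec = α) hm
    ⟨{ V := fun i => Fin (α i) → k, f := fun e => 0 }, by
      funext i; exact Module.finrank_fin_fun k⟩
  have hE : ExtZ X X := by
    refine extZ_of_gen hQ _ X rfl ?_
    intro U V hiso
    by_contra hcon
    obtain ⟨η, hη⟩ := ext_lt hcon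
    have h1 : (exr U V 0).Iso X := (exr_iso U V).trans hiso.symm
    have h2 := hmin (exr U V η) (by rw [exr_dim, h1.dim, hX])
    have h3 := h1.hm_le
    omega
  have h1 := euler hE
  rw [hX, hq] at h1
  refine ⟨X, indec_of_hm ?_ (by exact_mod_cast h1), hX⟩
  intro h
  apply hα
  rw [← hX]
  funext i
  exact Module.finrank_zero_iff.mpr (h i)

end exist

section uniq
open Polynomial

def PolyV {W : Type} [AddCommGroup W] [Module k W] (g : k → W) : Prop :=
  ∀ l : W →ₗ[k] k, ∃ P : k[X], ∀ x, l (g x) = P.eval x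

theorem adj_lemma {U : Type} [AddCommGroup U] [Module k U] [FiniteDimensional k U]
    (T : U →ₗ[k] U) (d : U) : ∃ p : k[X], p.eval 0 = 1 ∧ ∃ u : k → U, PolyV u ∧
      ∀ x, u x + x • T (u x) = p.eval x • d := by
  classical
  let b := Module.finBasis k U
  let A := LinearMap.toMatrix b b T
  let MM : Matrix (Fin (Module.finrank k U)) (Fin (Module.finrank k U)) k[X] :=
    1 + (X : k[X]) • A.map C
  let uu : Fin (Module.finrank k U) → k[X] := MM.adjugate.mulVec (fun a => C (b.repr d a))
  have huu : MM.mulVec uu = MM.det • (fun a => C (b.repr d a)) := by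
    simp only [uu, Matrix.mulVec_mulVec, Matrix.mul_adjugate, Matrix.smul_mulVec, Matrix.one_mulVec]
  have hu : ∀ x (a), b.repr (b.equivFun.symm (fun a => (uu a).eval x)) a = (uu a).eval x := by
    intro x a
    have := congrFun (b.equivFun.apply_symm_apply (fun a => (uu a).eval x)) a
    exact this
  refine ⟨MM.det, ?_, fun x => b.equivFun.symm (fun a => (uu a).eval x), ?_, ?_⟩
  · have h := RingHom.map_det (evalRingHom (0 : k)) MM
    rw [coe_evalRingHom] at h
    rw [h]
    have : (evalRingHom (0 : k)).mapMatrix MM = 1 := by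
      ext a c
      simp [MM, Matrix.one_apply]
      split_ifs <;> simp
    rw [this, Matrix.det_one]
  · intro l
    refine ⟨∑ a, uu a * C (l (b a)), fun x => ?_⟩
    change l (b.equivFun.symm (fun a => (uu a).eval x)) = _
    rw [Module.Basis.equivFun_symm_apply, map_sum, eval_finsetSum]
    simp
  · intro x
    apply b.repr.injective
    ext a
    have h1 := congrArg (eval x) (congrFun huu a)
    have h2 : b.repr (T (b.equivFun.symm (fun a => (uu a).eval x))) a =
        ∑ c, A a c * (uu c).eval x := by
      have := congrFun (LinearMap.toMatrix_mulVec_repr b b T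
        (b.equivFun.symm (fun a => (uu a).eval x))) a
      rw [← this]
      simp only [Matrix.mulVec, dotProduct, hu]
      rfl
    rw [map_add, map_smul, map_smul, Finsupp.add_apply, Finsupp.smul_apply, Finsupp.smul_apply,
      h2, hu]
    have h3 : MM.mulVec uu a = uu a + X * ∑ c, C (A a c) * uu c := by
      change ((1 + (X : k[X]) • A.map C).mulVec uu) a = _
      rw [Matrix.add_mulVec, Matrix.one_mulVec, Matrix.smul_mulVec]
      rfl
    rw [h3] at h1
    simp only [Pi.smul_apply, smul_eq_mul, eval_add, eval_mul, eval_X,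
      eval_finsetSum, eval_C] at h1
    exact h1

def pert (X : QRep k I E s t) (d : ∀ e, X.V (s e) →ₗ[k] X.V (t e)) : QRep k I E s t where
  V := X.V
  f e := X.f e + d e

theorem generic_iso [Fintype I] [Fintype E] {Y : QRep k I E s t} (hE : ExtZ Y Y)
    (d : ∀ e, Y.V (s e) →ₗ[k] Y.V (t e)) :
    ∃ P : k[X], P.eval 0 ≠ 0 ∧ ∀ x, P.eval x ≠ 0 → Y.Iso (Y.pert (x • d)) := by
  classical
  obtain ⟨B, hB⟩ := LinearMap.exists_rightInverse_of_surjective (dl Y Y)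
    (LinearMap.range_eq_top.mpr hE)
  have hB' : ∀ u, dl Y Y (B u) = u := fun u => LinearMap.congr_fun hB u
  let D : Fam Y Y →ₗ[k] (∀ e, Y.V (s e) →ₗ[k] Y.V (t e)) :=
    { toFun := fun φ e => d e ∘ₗ φ (s e)
      map_add' := fun a b => by funext e; ext v; simp
      map_smul' := fun c a => by funext e; ext v; simp }
  let one : Fam Y Y := fun i => LinearMap.id
  have hone : dl Y Y one = 0 := (isHom_iff _).mp (id_hom Y)
  obtain ⟨p, hp0, u, hu, hpu⟩ := adj_lemma (D ∘ₗ B) (D one)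
  let w : k → Fam Y Y := fun x => p.eval x • one - x • B (u x)
  have hw : ∀ x, dl Y Y (w x) + x • D (w x) = 0 := by
    intro x
    have h1 := hpu x
    rw [LinearMap.comp_apply] at h1
    simp only [w, map_sub, map_smul, hone, hB', smul_zero, zero_sub, smul_sub]
    rw [← h1, smul_add]
    abel
  have hwp : PolyV w := by
    intro l
    obtain ⟨Q, hQ⟩ := hu (l ∘ₗ B)
    refine ⟨p * C (l one) - X * Q, fun x => ?_⟩
    have := hQ x
    rw [LinearMap.comp_apply] at this
    simp only [w, map_sub, map_smul, this, smul_eq_mul, eval_sub, eval_mul, eval_X, eval_C]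
  have hdet : ∀ i, ∃ P : k[X], ∀ x, LinearMap.det (w x i) = P.eval x := by
    intro i
    let b := Module.finBasis k (Y.V i)
    have h1 : ∀ a c, ∃ P : k[X], ∀ x, LinearMap.toMatrix b b (w x i) a c = P.eval x := by
      intro a c
      obtain ⟨P, hP⟩ := hwp ((b.coord a) ∘ₗ (LinearMap.applyₗ (b c)) ∘ₗ
        (LinearMap.proj i : Fam Y Y →ₗ[k] (Y.V i →ₗ[k] Y.V i)))
      refine ⟨P, fun x => ?_⟩
      rw [← hP, LinearMap.toMatrix_apply]
      rfl
    choose Q hQ using h1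
    refine ⟨(Matrix.of Q).det, fun x => ?_⟩
    rw [← LinearMap.det_toMatrix b, ← coe_evalRingHom, RingHom.map_det]
    congr 1
    ext a c
    simp [hQ]
  choose P hP using hdet
  refine ⟨∏ i, P i, ?_, ?_⟩
  · rw [eval_prod, Finset.prod_ne_zero_iff]
    intro i _
    rw [← hP]
    have : w 0 i = LinearMap.id := by
      simp [w, hp0, one]
    rw [this, LinearMap.det_id]
    exact one_ne_zero
  · intro x hx
    rw [eval_prod, Finset.prod_ne_zero_iff] at hx
    have hx' : ∀ i, LinearMap.det (w x i) ≠ 0 := fun i => by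
      rw [hP]; exact hx i (Finset.mem_univ i)
    refine ⟨fun i => LinearMap.equivOfDetNeZero (w x i) (hx' i), ?_⟩
    intro e v
    have h1 := LinearMap.congr_fun (congrFun (hw x) e) v
    have h2 : Y.f e (w x (s e) v) - w x (t e) (Y.f e v) + x • d e (w x (s e) v) = 0 := h1
    change w x (t e) (Y.f e v) = Y.f e (w x (s e) v) + x • d e (w x (s e) v)
    rw [sub_add_eq_add_sub, sub_eq_zero] at h2
    exact h2.symm

theorem rigid_iso [Fintype I] [Fintype E] [IsAlgClosed k] {M N : QRep k I E s t}
    (hM : ExtZ M M) (hN : ExtZ N N) (hd : M.dimVec = N.dimVec) : M.Iso N := by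
  have hψ : ∀ i, Nonempty (M.V i ≃ₗ[k] N.V i) := fun i =>
    FiniteDimensional.nonempty_linearEquiv_of_finrank_eq (congrFun hd i)
  let ψ : ∀ i, M.V i ≃ₗ[k] N.V i := fun i => (hψ i).some
  -- transport N to the spaces of M
  let d : ∀ e, M.V (s e) →ₗ[k] M.V (t e) := fun e =>
    (ψ (t e)).symm.toLinearMap ∘ₗ N.f e ∘ₗ (ψ (s e)).toLinearMap - M.f e
  have h1 : ∀ (e : E) (v : M.V (s e)), ψ (t e) (M.f e v + d e v) = N.f e (ψ (s e) v) := by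
    intro e v
    simp [d]
  have hN' : (M.pert d).Iso N := ⟨ψ, h1⟩
  have hE' : ExtZ (M.pert d) (M.pert d) := hN'.extZ hN
  obtain ⟨P, hP0, hP⟩ := generic_iso hM d
  obtain ⟨Q, hQ0, hQ⟩ := generic_iso hE' (-d)
  have hne : P * Q.comp (1 - X) ≠ 0 := by
    apply mul_ne_zero
    · rintro rfl; simp at hP0
    · intro h
      have := congrArg (eval 1) h
      rw [eval_comp] at this
      simp at this
      exact hQ0 this
  obtain ⟨x, hx⟩ : ∃ x, (P * Q.comp (1 - X)).eval x ≠ 0 := by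
    by_contra hcon
    push Not at hcon
    exact hne (Polynomial.funext (fun x => by rw [hcon, eval_zero]))
  rw [eval_mul, eval_comp] at hx
  have hx1 := left_ne_zero_of_mul hx
  have hx2 := right_ne_zero_of_mul hx
  simp only [eval_sub, eval_one, eval_X] at hx2
  have i1 := hP x hx1
  have i2 := hQ (1 - x) hx2
  have i3 : (M.pert (x • d)).Iso ((M.pert d).pert ((1 - x) • (-d))) := by
    refine ⟨fun i => LinearEquiv.refl k (M.V i), fun e v => ?_⟩
    change M.f e v + x • d e v = M.f e v + d e v + (1 - x) • (- d e v)
    module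
  exact ((i1.trans i3).trans i2.symm).trans hN'

end uniq

end QRep

theorem stmt11 (k : Type) [Field k] [IsAlgClosed k] (I E : Type) [Fintype I] [Fintype E]
    (s t : E → I) (hQ : FiniteRepType k I E s t) :
    -- the dimension vector of an indecomposable is a positive root
    (∀ M : QRep k I E s t, M.Indecomposable →
      QRep.dimVec M ≠ 0 ∧ titsForm I E s t (QRep.dimVec M) = 1) ∧
    -- every positive root arises as the dimension vector of an indecomposable
    (∀ α : I → ℕ, α ≠ 0 → titsForm I E s t α = 1 →
      ∃ M : QRep k I E s t, M.Indecomposable ∧ QRep.dimVec M = α) ∧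
    -- two indecomposables with the same dimension vector are isomorphic
    (∀ M N : QRep k I E s t, M.Indecomposable → N.Indecomposable →
      QRep.dimVec M = QRep.dimVec N → M.Iso N) := by
  refine ⟨?_, ?_, ?_⟩
  · intro M hM
    have hb := QRep.indec_brick hQ _ M rfl hM
    refine ⟨fun h => hM.1 fun i => Module.finrank_zero_iff.mp (congrFun h i), ?_⟩
    rw [← QRep.euler (QRep.brick_extZ hQ hb), QRep.brick_hm hb]
    rfl
  · exact fun α hα hq => QRep.exists_indec hQ α hα hq
  · intro M N hM hN hd
    exact QRep.rigid_iso (QRep.brick_extZ hQ (QRep.indec_brick hQ _ M rfl hM))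
      (QRep.brick_extZ hQ (QRep.indec_brick hQ _ N rfl hN)) hd
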